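/- arXiv:math/0004056 — 2 statements merged into one kernel-verified Lean document; each statement's English description precedes it below -/
import Mathlib

section
/- Let n = p + q be odd with p − q ≡ 1 (mod 4) (i.e. p − q ≡ 1 or 5 mod 8, the case in which the volume element satisfies ω² = +1). Then Cl_{p,q} decomposes into a direct sum of two isomorphic subalgebras: if p ≥ 1 there is an ℝ-algebra isomorphism Cl_{p,q} ≅ Cl_{p−1,q} × Cl_{p−1,q}, and if q ≥ 1 there is an ℝ-algebra isomorphism Cl_{p,q} ≅ Cl_{p,q−1} × Cl_{p,q−1}. -/
open CliffordAlgebra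
open scoped TensorProduct

/-- The standard quadratic form of signature `(p,q)` on `ℝ^{p+q}`:
`Q(x) = x₁² + ⋯ + x_p² − x_{p+1}² − ⋯ − x_{p+q}²`. -/
noncomputable def Qpq (p q : ℕ) : QuadraticForm ℝ (Fin (p+q) → ℝ) :=
  QuadraticMap.weightedSumSquares ℝ (fun i : Fin (p+q) => if (i : ℕ) < p then (1 : ℝ) else -1)

/-- The real Clifford algebra `Cl_{p,q}`. -/
abbrev Cl (p q : ℕ) : Type := CliffordAlgebra (Qpq p q)

/-- The generators `e₁, …, e_{p+q}` of `Cl_{p,q}` (here `0`-indexed). -/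
noncomputable def e (p q : ℕ) (i : Fin (p+q)) : Cl p q :=
  CliffordAlgebra.ι (Qpq p q) (Pi.single i 1)


/-! Let `η` be the volume element of a diagonal form `Q` of even rank: it is even, anticommutes
with every vector, and squares to a scalar `d`. If a generator `E` with `E² = c` and `cd = 1` is
adjoined, then `ω = E * η` is a central involution, so the idempotents `(1 ± ω) / 2` split the
Clifford algebra of `⟨c⟩ ⊥ Q`. On either factor `ω = ±1`, that is, `E = ±cη`, so each factor is a
copy of the Clifford algebra of `Q`. -/

section AnticommutingLists

variable {A : Type*} [Monoid A] [HasDistribNeg A]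

theorem mul_neg_one_pow_comm (x : A) (n : ℕ) : x * (-1) ^ n = (-1) ^ n * x :=
  ((Commute.neg_one_right x).pow_right n).eq

theorem mul_list_prod_of_anticommute {x : A} {l : List A} (h : ∀ y ∈ l, x * y = -(y * x)) :
    x * l.prod = (-1) ^ l.length * (l.prod * x) := by
  have hsemi : ∀ y ∈ l, SemiconjBy x y (-y) := fun y hy => by
    simpa only [SemiconjBy, neg_mul] using h y hy
  have hprod : SemiconjBy x l.prod (l.map Neg.neg).prod := by
    clear h
    induction l with
    | nil => exact SemiconjBy.one_right x
    | cons y l ih =>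
      simp only [List.forall_mem_cons] at hsemi
      simpa only [List.map_cons, List.prod_cons] using hsemi.1.mul_right (ih hsemi.2)
  rw [hprod.eq, List.prod_map_neg, mul_assoc]

theorem mul_list_prod_of_mem_of_pairwise_anticommute {x : A} {l : List A}
    (h : l.Pairwise fun a b => a * b = -(b * a)) (hx : x ∈ l) :
    x * l.prod = (-1) ^ (l.length + 1) * (l.prod * x) := by
  induction l with
  | nil => simp only [List.not_mem_nil] at hx
  | cons y l ih =>
    obtain ⟨hy, hl⟩ := List.pairwise_cons.mp h
    rw [List.prod_cons, List.length_cons]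
    rcases List.mem_cons.mp hx with rfl | hxl
    · calc x * (x * l.prod) = x * ((-1) ^ l.length * (l.prod * x)) := by
            rw [mul_list_prod_of_anticommute hy]
        _ = (-1) ^ l.length * (x * l.prod * x) := by
            rw [← mul_assoc, mul_neg_one_pow_comm, mul_assoc, mul_assoc]
        _ = (-1) ^ (l.length + 1 + 1) * (x * l.prod * x) := by simp [pow_succ]
    · calc x * (y * l.prod) = -(y * (x * l.prod)) := by
            rw [← mul_assoc, ← mul_assoc, hy x hxl, neg_mul, neg_neg]
        _ = -((-1) ^ (l.length + 1) * (y * l.prod * x)) := by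
            rw [ih hl hxl, ← mul_assoc, mul_neg_one_pow_comm, mul_assoc, mul_assoc]
        _ = (-1) ^ (l.length + 1 + 1) * (y * l.prod * x) := by simp [pow_succ]

theorem list_prod_mul_self_of_pairwise_anticommute {l : List A}
    (h : l.Pairwise fun a b => a * b = -(b * a)) :
    l.prod * l.prod = (-1) ^ l.length.choose 2 * (l.map fun a => a * a).prod := by
  induction l with
  | nil => simp
  | cons x l ih =>
    obtain ⟨hx, hl⟩ := List.pairwise_cons.mp h
    have swap : l.prod * x = (-1) ^ l.length * (x * l.prod) := by
      rw [mul_list_prod_of_anticommute hx, ← mul_assoc, ← pow_add, (Even.add_self _).neg_one_pow,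
        one_mul]
    simp only [List.prod_cons, List.map_cons, List.length_cons]
    calc x * l.prod * (x * l.prod) = x * (l.prod * x) * l.prod := by simp only [mul_assoc]
      _ = (-1) ^ l.length * (x * x * (l.prod * l.prod)) := by
        rw [swap, ← mul_assoc x, mul_neg_one_pow_comm]; simp only [mul_assoc]
      _ = (-1) ^ l.length * (-1) ^ l.length.choose 2 *
            (x * x * (l.map fun a => a * a).prod) := by
        rw [ih hl, ← mul_assoc (x * x), mul_neg_one_pow_comm]; simp only [mul_assoc]
      _ = (-1) ^ (l.length + 1).choose 2 * (x * x * (l.map fun a => a * a).prod) := by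
        rw [← pow_add, Nat.choose_succ_succ' l.length 1, Nat.choose_one_right]

end AnticommutingLists

section Idempotent

variable {R A B : Type*} [CommRing R] [Ring A] [Algebra R A] [Ring B] [Algebra R B]

theorem isIdempotentElem_invOf_two_smul_one_add [Invertible (2 : R)] {ω : B} (hω : ω * ω = 1) :
    IsIdempotentElem ((⅟2 : R) • (1 + ω)) := by
  have hsq : (1 + ω) * (1 + ω) = (2 : R) • (1 + ω) := by
    rw [add_mul, mul_add, mul_add, hω, two_smul]
    noncomm_ring
  rw [IsIdempotentElem, smul_mul_smul_comm, hsq, smul_smul, mul_assoc, invOf_mul_self, mul_one]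

/-- The homomorphism `(a, b) ↦ f a * u + f b * (1 - u)` glued from two copies of `f` along an
idempotent `u` commuting with the range of `f`. -/
def prodAlgHomOfIdempotent (f : A →ₐ[R] B) {u : B} (hu : IsIdempotentElem u)
    (hcomm : ∀ a, Commute u (f a)) : A × A →ₐ[R] B :=
  AlgHom.ofLinearMap
    ((LinearMap.mulRight R u ∘ₗ f.toLinearMap).coprod
      (LinearMap.mulRight R (1 - u) ∘ₗ f.toLinearMap))
    (by simp)
    (by
      rintro ⟨a, b⟩ ⟨a', b'⟩
      have hcomm' (a : A) : Commute (1 - u) (f a) := (Commute.one_left _).sub_left (hcomm a)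
      simp only [LinearMap.coprod_apply, LinearMap.comp_apply, LinearMap.mulRight_apply,
        AlgHom.toLinearMap_apply, Prod.mk_mul_mk, map_mul, add_mul, mul_add]
      rw [(hcomm a').mul_mul_mul_comm, (hcomm b').mul_mul_mul_comm,
        (hcomm' a').mul_mul_mul_comm, (hcomm' b').mul_mul_mul_comm, hu.eq, hu.one_sub.eq,
        hu.mul_one_sub_self, hu.one_sub_mul_self, mul_zero, mul_zero, add_zero, zero_add])

theorem prodAlgHomOfIdempotent_apply (f : A →ₐ[R] B) {u : B} (hu : IsIdempotentElem u)
    (hcomm : ∀ a, Commute u (f a)) (x : A × A) :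
    prodAlgHomOfIdempotent f hu hcomm x = f x.1 * u + f x.2 * (1 - u) :=
  rfl

end Idempotent

section Adjoin

variable {R M : Type*} [CommRing R] [AddCommGroup M] [Module R M]

/-- The orthogonal sum `⟨c⟩ ⊥ Q`, which adjoins to the Clifford algebra of `Q` one generator of
square `c`. The new coordinate comes first. -/
abbrev orthAdjoin (c : R) (Q : QuadraticForm R M) : QuadraticForm R (R × M) :=
  (c • QuadraticMap.sq).prod Q

/-- An even element of the Clifford algebra that anticommutes with all vectors and has square `d`,
as the volume element does in even dimension. -/
structure IsPseudoscalar (Q : QuadraticForm R M) (d : R) (η : CliffordAlgebra Q) : Prop where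
  mem_even : η ∈ evenOdd Q 0
  ι_mul (m : M) : ι Q m * η = -(η * ι Q m)
  mul_self : η * η = algebraMap R _ d

variable {c d s : R} {Q : QuadraticForm R M} {η : CliffordAlgebra Q}

/-- The homomorphism onto the Clifford algebra of `Q` that fixes `Q` and sends the adjoined
generator to `s • η`. -/
def IsPseudoscalar.projection (hη : IsPseudoscalar Q d η) (hs : s * s * d = c) :
    CliffordAlgebra (orthAdjoin c Q) →ₐ[R] CliffordAlgebra Q :=
  lift (orthAdjoin c Q) ⟨(s • LinearMap.fst R R M).smulRight η + ι Q ∘ₗ LinearMap.snd R R M, by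
    rintro ⟨t, m⟩
    have hcross : ((s * t) • η) * ι Q m + ι Q m * ((s * t) • η) = 0 := by
      rw [smul_mul_assoc, mul_smul_comm, hη.ι_mul, smul_neg, add_neg_cancel]
    have hsq : ((s * t) • η) * ((s * t) • η) = algebraMap R _ (c * (t * t)) := by
      rw [smul_mul_smul_comm, hη.mul_self, Algebra.smul_def, ← map_mul, ← hs]
      congr 1; ring
    calc ((s * t) • η + ι Q m) * ((s * t) • η + ι Q m)
        = ((s * t) • η) * ((s * t) • η) + (((s * t) • η) * ι Q m + ι Q m * ((s * t) • η))
            + ι Q m * ι Q m := by rw [add_mul, mul_add, mul_add]; abel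
      _ = algebraMap R _ (orthAdjoin c Q (t, m)) := by
        rw [hcross, hsq, ι_sq_scalar, add_zero, ← map_add]; rfl⟩

theorem IsPseudoscalar.projection_ι (hη : IsPseudoscalar Q d η) (hs : s * s * d = c) (t : R)
    (m : M) : hη.projection hs (ι (orthAdjoin c Q) (t, m)) = (s * t) • η + ι Q m :=
  lift_ι_apply _ _ _

variable (c Q) in
/-- The inclusion of the Clifford algebra of `Q` into that of `⟨c⟩ ⊥ Q`. -/
def inclusion : CliffordAlgebra Q →ₐ[R] CliffordAlgebra (orthAdjoin c Q) :=
  map (QuadraticMap.Isometry.inr (c • QuadraticMap.sq) Q)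

variable (c) in
theorem inclusion_ι (m : M) : inclusion c Q (ι Q m) = ι (orthAdjoin c Q) (0, m) :=
  map_apply_ι _ _

theorem IsPseudoscalar.projection_inclusion (hη : IsPseudoscalar Q d η) (hs : s * s * d = c)
    (a : CliffordAlgebra Q) : hη.projection hs (inclusion c Q a) = a := by
  have hid : (hη.projection hs).comp (inclusion c Q) = AlgHom.id R _ := by
    ext m
    simp [inclusion_ι, IsPseudoscalar.projection_ι]
  exact DFunLike.congr_fun hid a

variable (c Q) in
/-- The generator of square `c` adjoined to the Clifford algebra of `Q`. -/
def newGenerator : CliffordAlgebra (orthAdjoin c Q) :=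
  ι (orthAdjoin c Q) (1, 0)

theorem newGenerator_mul_self :
    newGenerator c Q * newGenerator c Q = algebraMap R _ c := by
  simp [newGenerator, ι_sq_scalar]

theorem ι_orthAdjoin (t : R) (m : M) :
    ι (orthAdjoin c Q) (t, m) = t • newGenerator c Q + inclusion c Q (ι Q m) := by
  rw [inclusion_ι, newGenerator, ← map_smul, ← map_add]; simp

theorem newGenerator_mul_inclusion_ι (m : M) :
    newGenerator c Q * inclusion c Q (ι Q m) = -(inclusion c Q (ι Q m) * newGenerator c Q) := by
  rw [inclusion_ι]
  exact ι_mul_ι_comm_of_isOrtho (QuadraticMap.IsOrtho.inl_inr 1 m)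

theorem commute_newGenerator_inclusion (hη : η ∈ evenOdd Q 0) :
    Commute (newGenerator c Q) (inclusion c Q η) := by
  have h := commute_map_mul_map_of_isOrtho_of_mem_evenOdd_zero_right
    (QuadraticMap.Isometry.inl (c • QuadraticMap.sq) Q) (QuadraticMap.Isometry.inr _ Q)
    (fun t m => QuadraticMap.IsOrtho.inl_inr t m) (ι _ 1) η (ι_mem_evenOdd_one _ 1) hη
  rwa [map_apply_ι] at h

theorem commute_map_of_commute_map_ι {A : Type*} [Ring A] [Algebra R A]
    (f : CliffordAlgebra Q →ₐ[R] A) {x : A} (h : ∀ m, Commute x (f (ι Q m)))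
    (a : CliffordAlgebra Q) : Commute x (f a) := by
  induction a using CliffordAlgebra.induction with
  | algebraMap r => rw [f.commutes]; exact Algebra.commute_algebraMap_right r x
  | ι m => exact h m
  | mul a b ha hb => rw [map_mul]; exact ha.mul_right hb
  | add a b ha hb => rw [map_add]; exact ha.add_right hb

namespace IsPseudoscalar

variable (c η) in
/-- The volume element `ω = E * η` of `⟨c⟩ ⊥ Q` built from the adjoined generator `E` and a
pseudoscalar `η` of `Q`. -/
def volume : CliffordAlgebra (orthAdjoin c Q) :=
  newGenerator c Q * inclusion c Q η

theorem volume_mul_inclusion (hη : IsPseudoscalar Q d η) :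
    volume c η * inclusion c Q η = d • newGenerator c Q := by
  rw [volume, mul_assoc, ← map_mul, hη.mul_self, AlgHom.commutes, ← Algebra.commutes,
    Algebra.smul_def]

theorem volume_mul_self (hη : IsPseudoscalar Q d η) (hcd : c * d = 1) :
    volume c η * volume c η = 1 := by
  calc volume c η * volume c η
      = volume c η * inclusion c Q η * newGenerator c Q := by
        rw [mul_assoc, ← (commute_newGenerator_inclusion hη.mem_even).eq, volume]
    _ = 1 := by
      rw [hη.volume_mul_inclusion, smul_mul_assoc, newGenerator_mul_self, Algebra.smul_def,
        ← map_mul, mul_comm, hcd, map_one]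

theorem commute_volume_inclusion (hη : IsPseudoscalar Q d η) (a : CliffordAlgebra Q) :
    Commute (volume c η) (inclusion c Q a) := by
  refine commute_map_of_commute_map_ι (inclusion c Q) (fun m => ?_) a
  have hanti : inclusion c Q η * inclusion c Q (ι Q m)
      = -(inclusion c Q (ι Q m) * inclusion c Q η) := by
    rw [← map_mul, ← map_mul, hη.ι_mul, map_neg, neg_neg]
  rw [commute_iff_eq, volume, mul_assoc, hanti, mul_neg, ← mul_assoc,
    newGenerator_mul_inclusion_ι, neg_mul, neg_neg, mul_assoc]

theorem projection_volume (hη : IsPseudoscalar Q d η) (hs : s * s * d = c) :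
    hη.projection hs (volume c η) = algebraMap R _ (s * d) := by
  rw [volume, map_mul, projection_inclusion, newGenerator, projection_ι, map_zero, add_zero,
    mul_one, smul_mul_assoc, hη.mul_self, Algebra.smul_def, map_mul]

/-- The pair of homomorphisms sending the adjoined generator to `c • η` and to `-c • η`. -/
def toProd (hη : IsPseudoscalar Q d η) (hcd : c * d = 1) :
    CliffordAlgebra (orthAdjoin c Q) →ₐ[R] CliffordAlgebra Q × CliffordAlgebra Q :=
  have hc : c * c * d = c := by rw [mul_assoc, hcd, mul_one]
  (hη.projection hc).prod (hη.projection (s := -c) (by rwa [neg_mul_neg]))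

theorem toProd_ι (hη : IsPseudoscalar Q d η) (hcd : c * d = 1) (t : R) (m : M) :
    hη.toProd hcd (ι (orthAdjoin c Q) (t, m)) =
      (ι Q m + (c * t) • η, ι Q m - (c * t) • η) := by
  simp only [toProd, AlgHom.prod_apply, projection_ι, neg_mul, neg_smul, sub_eq_neg_add,
    add_comm (ι Q m)]

theorem toProd_inclusion (hη : IsPseudoscalar Q d η) (hcd : c * d = 1) (a : CliffordAlgebra Q) :
    hη.toProd hcd (inclusion c Q a) = (a, a) := by
  simp only [toProd, AlgHom.prod_apply, projection_inclusion]

theorem toProd_volume (hη : IsPseudoscalar Q d η) (hcd : c * d = 1) :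
    hη.toProd hcd (volume c η) = (1, -1) := by
  simp only [toProd, AlgHom.prod_apply, projection_volume, neg_mul, hcd, map_neg, map_one]

variable [Invertible (2 : R)]

/-- The homomorphism glued from two copies of the inclusion along the central idempotent
`(1 + ω) / 2`. -/
def ofProd (hη : IsPseudoscalar Q d η) (hcd : c * d = 1) :
    CliffordAlgebra Q × CliffordAlgebra Q →ₐ[R] CliffordAlgebra (orthAdjoin c Q) :=
  prodAlgHomOfIdempotent (inclusion c Q)
    (isIdempotentElem_invOf_two_smul_one_add (R := R) (hη.volume_mul_self hcd))
    fun a => ((Commute.one_left _).add_left (hη.commute_volume_inclusion a)).smul_left _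

theorem ofProd_apply (hη : IsPseudoscalar Q d η) (hcd : c * d = 1)
    (x : CliffordAlgebra Q × CliffordAlgebra Q) :
    hη.ofProd hcd x = inclusion c Q x.1 * ((⅟2 : R) • (1 + volume c η)) +
      inclusion c Q x.2 * (1 - (⅟2 : R) • (1 + volume c η)) :=
  rfl

theorem ofProd_add_sub (hη : IsPseudoscalar Q d η) (hcd : c * d = 1) (a b : CliffordAlgebra Q) :
    hη.ofProd hcd (a + b, a - b) = inclusion c Q a + inclusion c Q b * volume c η := by
  rw [ofProd_apply]
  set u := (⅟2 : R) • (1 + volume c η) with hu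
  have hdouble : u + u = 1 + volume c η := by
    rw [hu, ← smul_add, ← two_smul R, smul_smul, invOf_mul_self, one_smul]
  calc inclusion c Q (a + b) * u + inclusion c Q (a - b) * (1 - u)
      = inclusion c Q a + inclusion c Q b * (u + u - 1) := by
        rw [map_add, map_sub]; noncomm_ring
    _ = inclusion c Q a + inclusion c Q b * volume c η := by
        rw [hdouble, add_sub_cancel_left]

theorem ofProd_toProd (hη : IsPseudoscalar Q d η) (hcd : c * d = 1) :
    (hη.ofProd hcd).comp (hη.toProd hcd) = AlgHom.id R _ := by
  refine CliffordAlgebra.hom_ext (LinearMap.ext fun ⟨t, m⟩ => ?_)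
  have hgen : inclusion c Q ((c * t) • η) * volume c η = t • newGenerator c Q := by
    rw [map_smul, smul_mul_assoc, ← (hη.commute_volume_inclusion η).eq, hη.volume_mul_inclusion,
      smul_smul, mul_right_comm, hcd, one_mul]
  calc hη.ofProd hcd (hη.toProd hcd (ι (orthAdjoin c Q) (t, m)))
      = inclusion c Q (ι Q m) + inclusion c Q ((c * t) • η) * volume c η := by
        rw [toProd_ι, ofProd_add_sub]
    _ = ι (orthAdjoin c Q) (t, m) := by rw [hgen, add_comm, ← ι_orthAdjoin]

theorem toProd_ofProd (hη : IsPseudoscalar Q d η) (hcd : c * d = 1) :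
    (hη.toProd hcd).comp (hη.ofProd hcd) = AlgHom.id R _ := by
  refine AlgHom.ext fun x => ?_
  have hidem : (⅟2 : R) • ((1, 1) + (1, -1) : CliffordAlgebra Q × CliffordAlgebra Q) = (1, 0) := by
    rw [Prod.mk_add_mk, Prod.smul_mk, add_neg_cancel, smul_zero, smul_add,
      invOf_two_smul_add_invOf_two_smul]
  rw [AlgHom.comp_apply, ofProd_apply, map_add, map_mul, map_mul, map_sub, map_smul, map_add,
    map_one, toProd_volume, toProd_inclusion, toProd_inclusion, Prod.one_eq_mk, hidem]
  simp

/-- The Clifford algebra of `⟨c⟩ ⊥ Q` splits as two copies of that of `Q`. -/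
def algEquivProd (hη : IsPseudoscalar Q d η) (hcd : c * d = 1) :
    CliffordAlgebra (orthAdjoin c Q) ≃ₐ[R] CliffordAlgebra Q × CliffordAlgebra Q :=
  AlgEquiv.ofAlgHom (hη.toProd hcd) (hη.ofProd hcd) (hη.toProd_ofProd hcd) (hη.ofProd_toProd hcd)

end IsPseudoscalar

end Adjoin

section Diagonal

variable {R κ : Type*} [CommRing R] [Fintype κ]

theorem ι_single_mul_self [DecidableEq κ] (w : κ → R) (i : κ) :
    ι (QuadraticMap.weightedSumSquares R w) (Pi.single i 1) * ι _ (Pi.single i 1) =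
      algebraMap R _ (w i) := by
  rw [ι_sq_scalar, QuadraticMap.weightedSumSquares_apply]
  simp [Pi.single_apply]

theorem isOrtho_weightedSumSquares_single [DecidableEq κ] (w : κ → R) {i j : κ} (hij : i ≠ j) :
    (QuadraticMap.weightedSumSquares R w).IsOrtho (Pi.single i 1) (Pi.single j 1) := by
  simp only [QuadraticMap.isOrtho_def, QuadraticMap.weightedSumSquares_apply, smul_eq_mul,
    Pi.add_apply, ← Finset.sum_add_distrib]
  refine Finset.sum_congr rfl fun k _ => ?_
  rcases eq_or_ne k i with rfl | hki
  · simp [hij]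
  · simp [hki]

theorem ι_single_anticommute [DecidableEq κ] (w : κ → R) {i j : κ} (hij : i ≠ j) :
    ι (QuadraticMap.weightedSumSquares R w) (Pi.single i 1) * ι _ (Pi.single j 1) =
      -(ι _ (Pi.single j 1) * ι _ (Pi.single i 1)) :=
  ι_mul_ι_comm_of_isOrtho (isOrtho_weightedSumSquares_single w hij)

open Classical in
/-- The list of the standard generators of the Clifford algebra of a diagonal form, in an arbitrary
order. -/
noncomputable def generators (w : κ → R) :
    List (CliffordAlgebra (QuadraticMap.weightedSumSquares R w)) :=
  Finset.univ.toList.map fun i => ι _ (Pi.single i 1)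

theorem length_generators (w : κ → R) : (generators w).length = Fintype.card κ := by
  simp [generators]

theorem pairwise_anticommute_generators (w : κ → R) :
    (generators w).Pairwise fun a b => a * b = -(b * a) := by
  classical
  exact List.Pairwise.map _ (fun _ _ hij => ι_single_anticommute w hij) (Finset.nodup_toList _)

theorem isPseudoscalar_prod_generators (w : κ → R) (heven : Even (Fintype.card κ)) :
    IsPseudoscalar (QuadraticMap.weightedSumSquares R w)
      ((-1) ^ (Fintype.card κ).choose 2 * ∏ i, w i) (generators w).prod where
  mem_even := by
    classical
    have h := SetLike.list_prod_map_mem_graded (A := evenOdd (QuadraticMap.weightedSumSquares R w))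
      (Finset.univ : Finset κ).toList (fun _ => 1) (fun i => ι _ (Pi.single i 1))
      fun i _ => ι_mem_evenOdd_one _ _
    have hdeg : ((Finset.univ : Finset κ).toList.map fun _ => (1 : ZMod 2)).sum = 0 := by
      simpa [ZMod.natCast_eq_zero_iff_even] using heven
    rwa [hdeg] at h
  ι_mul m := by
    classical
    have hlin : LinearMap.mulRight R (generators w).prod ∘ₗ ι _ =
        -(LinearMap.mulLeft R (generators w).prod ∘ₗ ι _) := by
      refine (Pi.basisFun R κ).ext fun i => ?_
      have hmem : ι _ (Pi.single i 1) ∈ generators w :=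
        List.mem_map.mpr ⟨i, Finset.mem_toList.mpr (Finset.mem_univ i), rfl⟩
      simpa [length_generators, heven.add_one.neg_one_pow] using
        mul_list_prod_of_mem_of_pairwise_anticommute (pairwise_anticommute_generators w) hmem
    exact DFunLike.congr_fun hlin m
  mul_self := by
    have hsq : ((generators w).map fun a => a * a).prod = algebraMap R _ (∏ i, w i) := by
      calc ((generators w).map fun a => a * a).prod
          = ((Finset.univ.toList.map w).map (algebraMap R _)).prod := by
            simp only [generators, List.map_map, Function.comp_def, ι_single_mul_self]
        _ = algebraMap R _ (∏ i, w i) := by rw [← map_list_prod, Finset.prod_map_toList]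
    rw [list_prod_mul_self_of_pairwise_anticommute (pairwise_anticommute_generators w),
      length_generators, hsq]
    simp

/-- A diagonal form with one weight singled out is that weight adjoined to the form with the
remaining weights. -/
def isometryEquivOrthAdjoin {κ' : Type*} [Fintype κ'] (w : κ' → R) (σ : Option κ ≃ κ') :
    (QuadraticMap.weightedSumSquares R w).IsometryEquiv
      (orthAdjoin (w (σ none)) (QuadraticMap.weightedSumSquares R fun i => w (σ (some i)))) where
  toLinearEquiv := LinearEquiv.funCongrLeft R R σ ≪≫ₗ LinearEquiv.piOptionEquivProd R
  map_app' x := by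
    simp [QuadraticMap.weightedSumSquares_apply, ← Equiv.sum_comp σ, Fintype.sum_option,
      LinearEquiv.piOptionEquivProd, Equiv.piOptionEquivProd, LinearMap.funLeft_apply]

theorem cl_odd_direct_sum_decomposition_general [Invertible (2 : R)] {κ' : Type*} [Fintype κ']
    (w : κ' → R) (σ : Option κ ≃ κ') (hodd : Odd (Fintype.card κ'))
    (hω : (-1) ^ (Fintype.card κ').choose 2 * ∏ i, w i = 1) :
    Nonempty (CliffordAlgebra (QuadraticMap.weightedSumSquares R w) ≃ₐ[R]
      CliffordAlgebra (QuadraticMap.weightedSumSquares R fun i => w (σ (some i))) ×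
        CliffordAlgebra (QuadraticMap.weightedSumSquares R fun i => w (σ (some i)))) := by
  have hcard : Fintype.card κ' = Fintype.card κ + 1 := by
    rw [← Fintype.card_congr σ, Fintype.card_option]
  have heven : Even (Fintype.card κ) := by
    rwa [hcard, Nat.odd_add_one, Nat.not_odd_iff_even] at hodd
  have hcd : w (σ none) * ((-1) ^ (Fintype.card κ).choose 2 * ∏ i, w (σ (some i))) = 1 := by
    rw [hcard, Nat.choose_succ_succ', Nat.choose_one_right, pow_add, heven.neg_one_pow, one_mul,
      ← Equiv.prod_comp σ, Fintype.prod_option] at hω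
    rwa [mul_left_comm]
  exact ⟨(equivOfIsometry (isometryEquivOrthAdjoin w σ)).trans
    ((isPseudoscalar_prod_generators _ heven).algEquivProd hcd)⟩

end Diagonal

section Signature

/-- The weights of `Qpq p q`: first `p` times `1`, then `q` times `-1`. -/
noncomputable def signature (p q : ℕ) (i : Fin (p + q)) : ℝ :=
  if (i : ℕ) < p then 1 else -1

theorem prod_signature (p q : ℕ) : ∏ i, signature p q i = (-1) ^ q := by
  simp [Fin.prod_univ_add, signature]

theorem neg_one_pow_choose_two_mul_prod_signature {p q : ℕ} (hodd : Odd (p + q))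
    (hmod : ((p : ℤ) - q) % 4 = 1) :
    (-1) ^ (Fintype.card (Fin (p + q))).choose 2 * ∏ i, signature p q i = 1 := by
  obtain ⟨m, hm⟩ := hodd
  have hchoose : (p + q).choose 2 = (2 * m + 1) * m := by
    rw [hm, Nat.choose_two_right, Nat.add_sub_cancel, mul_left_comm,
      Nat.mul_div_cancel_left _ two_pos]
  have heven : Even (m + q) := by rw [Nat.even_iff]; omega
  rw [Fintype.card_fin, hchoose, prod_signature, pow_mul, (odd_two_mul_add_one m).neg_one_pow,
    ← pow_add, heven.neg_one_pow]

/-- The index set `Fin N` as `Fin n` together with the index `j`. -/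
def optionFinEquiv {n N : ℕ} (h : n + 1 = N) (j : Fin (n + 1)) : Option (Fin n) ≃ Fin N :=
  (finSuccEquiv' j).symm.trans (finCongr h)

theorem signature_delete_zero {p q : ℕ} (h : p - 1 + q + 1 = p + q) :
    (fun i => signature p q (optionFinEquiv h 0 (some i))) = signature (p - 1) q := by
  funext i
  simp [signature, optionFinEquiv, Nat.lt_sub_iff_add_lt]

theorem signature_delete_last {p q : ℕ} (h : p + (q - 1) + 1 = p + q) :
    (fun i => signature p q (optionFinEquiv h (Fin.last _) (some i))) = signature p (q - 1) := by
  funext i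
  simp [signature, optionFinEquiv]

end Signature

/-- For `n = p + q` odd with `p − q ≡ 1 (mod 4)` (i.e. `p − q ≡ 1, 5 (mod 8)`, the case
`ω² = +1`), the Clifford algebra `Cl_{p,q}` decomposes into a direct sum of two isomorphic
subalgebras: if `p ≥ 1` then `Cl_{p,q} ≅ Cl_{p−1,q} × Cl_{p−1,q}`, and if `q ≥ 1` then
`Cl_{p,q} ≅ Cl_{p,q−1} × Cl_{p,q−1}`, as `ℝ`-algebras. -/
theorem cl_odd_direct_sum_decomposition (p q : ℕ) (hodd : Odd (p + q))
    (hmod : ((p : ℤ) - q) % 4 = 1) :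
    (1 ≤ p → Nonempty (Cl p q ≃ₐ[ℝ] (Cl (p - 1) q × Cl (p - 1) q))) ∧
    (1 ≤ q → Nonempty (Cl p q ≃ₐ[ℝ] (Cl p (q - 1) × Cl p (q - 1)))) := by
  have hω := neg_one_pow_choose_two_mul_prod_signature hodd hmod
  rw [← Fintype.card_fin (p + q)] at hodd
  refine ⟨fun hp => ?_, fun hq => ?_⟩
  · have hcard : p - 1 + q + 1 = p + q := by omega
    have hsplit := cl_odd_direct_sum_decomposition_general _ (optionFinEquiv hcard 0) hodd hω
    rwa [signature_delete_zero] at hsplit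
  · have hcard : p + (q - 1) + 1 = p + q := by omega
    have hsplit :=
      cl_odd_direct_sum_decomposition_general _ (optionFinEquiv hcard (Fin.last _)) hodd hω
    rwa [signature_delete_last] at hsplit
end

section
/- For all p, q ≥ 0 there are isomorphisms of ℝ-algebras: Cl_{p,q+2} ≅ Cl_{0,2} ⊗ Cl_{q,p}, Cl_{p+2,q} ≅ Cl_{2,0} ⊗ Cl_{q,p}, and Cl_{p+1,q+1} ≅ Cl_{1,1} ⊗ Cl_{p,q}, where ⊗ denotes the ordinary tensor product of ℝ-algebras. -/
open CliffordAlgebra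
open scoped TensorProduct

/-!
In `Cl(Q ⊕ P)` vectors of the two summands anticommute, whereas in `Cl(Q) ⊗ Cl(P)` they have to
commute. When `dim Q` is even, the product `ω` of an orthogonal basis of `Q` anticommutes with
every vector of `Q`, so `v ⊗ 1` and `ω ⊗ w` again anticommute; the price is that
`(ω ⊗ w)² = ω² P(w)`, which rescales `P` by `c = ω²`. In dimension two `ω² = -(e₁² e₂²)` is `-1`
for a definite plane, which swaps the signature of `P`, and `1` for a hyperbolic plane.
-/

section Twisting

variable {R V W : Type*} [CommRing R] [AddCommGroup V] [Module R V] [AddCommGroup W] [Module R W]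

theorem commute_of_commute_ι {A : Type*} [Semiring A] [Algebra R A]
    {Q : QuadraticForm R V} {P : QuadraticForm R W}
    {f : CliffordAlgebra Q →ₐ[R] A} {g : CliffordAlgebra P →ₐ[R] A}
    (h : ∀ v w, Commute (f (ι Q v)) (g (ι P w))) (x : CliffordAlgebra Q) (y : CliffordAlgebra P) :
    Commute (f x) (g y) := by
  induction x using CliffordAlgebra.induction with
  | algebraMap r => simpa only [AlgHom.commutes] using Algebra.commute_algebraMap_left r (g y)
  | add a b ha hb => simpa only [map_add] using ha.add_left hb
  | mul a b ha hb => simpa only [map_mul] using ha.mul_left hb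
  | ι v =>
    induction y using CliffordAlgebra.induction with
    | algebraMap r => simpa only [AlgHom.commutes] using Algebra.commute_algebraMap_right r _
    | add a b ha hb => simpa only [map_add] using ha.add_right hb
    | mul a b ha hb => simpa only [map_mul] using ha.mul_right hb
    | ι w => exact h v w

theorem commute_map_inl_ι_inr {Q : QuadraticForm R V} (P : QuadraticForm R W)
    {x : CliffordAlgebra Q} (hx : x ∈ evenOdd Q 0) (w : W) :
    Commute (map (.inl Q P) x) (ι (Q.prod P) (0, w)) := by
  have hcomm := commute_map_mul_map_of_isOrtho_of_mem_evenOdd_zero_left (.inl Q P) (.inr Q P)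
    (fun _ _ ↦ .inl_inr _ _) x (ι P w) hx (ι_mem_evenOdd_one P w)
  rwa [map_apply_ι] at hcomm

/-- A twisting element of `CliffordAlgebra Q`: an even element that anticommutes with all vectors
and squares to the unit `c`, as the volume element of a nondegenerate space of even rank does. -/
structure IsTwistingElement (Q : QuadraticForm R V) (ω : CliffordAlgebra Q) (c : Rˣ) : Prop where
  mem_evenOdd_zero : ω ∈ evenOdd Q 0
  mul_self : ω * ω = algebraMap R _ c
  ι_mul (v : V) : ι Q v * ω = -(ω * ι Q v)

namespace IsTwistingElement

variable {Q : QuadraticForm R V} {ω : CliffordAlgebra Q} {c : Rˣ}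

theorem of_isOrtho {a b : V} (hab : Q.IsOrtho a b) (hspan : Submodule.span R {a, b} = ⊤)
    (hc : -(Q a * Q b) = c) : IsTwistingElement Q (ι Q a * ι Q b) c where
  mem_evenOdd_zero := ι_mul_ι_mem_evenOdd_zero Q a b
  mul_self := by
    rw [mul_assoc, ι_mul_ι_mul_of_isOrtho _ hab.symm, ι_sq_scalar, mul_neg, ← mul_assoc,
      ι_sq_scalar, ← map_mul, ← map_neg, hc]
  ι_mul v := by
    obtain ⟨x, y, rfl⟩ := Submodule.mem_span_pair.mp (hspan ▸ Submodule.mem_top : v ∈ _)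
    have hba : ι Q b * ι Q a = -(ι Q a * ι Q b) := ι_mul_ι_comm_of_isOrtho hab.symm
    have ha : ι Q a * (ι Q a * ι Q b) = -(ι Q a * ι Q b * ι Q a) := by
      rw [mul_assoc, hba, mul_neg, neg_neg]
    have hb : ι Q b * (ι Q a * ι Q b) = -(ι Q a * ι Q b * ι Q b) := by
      rw [← mul_assoc, hba, neg_mul]
    simp only [map_add, map_smul, add_mul, mul_add, smul_mul_assoc, mul_smul_comm, ha, hb, neg_add,
      smul_neg]

variable (h : IsTwistingElement Q ω c)
include h

theorem map_mul_self {P : QuadraticForm R W} (f : Q →qᵢ P) :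
    map f ω * map f ω = algebraMap R _ c := by
  rw [← map_mul, h.mul_self, AlgHom.commutes]

variable (P : QuadraticForm R W)

theorem tmul_ι_mul_self (w : W) :
    (ω ⊗ₜ[R] ι P w) * (ω ⊗ₜ ι P w) = algebraMap R _ (c • P w) := by
  rw [Algebra.TensorProduct.tmul_mul_tmul, h.mul_self, ι_sq_scalar, Units.smul_def, smul_eq_mul,
    map_mul, Algebra.TensorProduct.algebraMap_apply, Algebra.TensorProduct.algebraMap_apply',
    Algebra.TensorProduct.tmul_mul_tmul, mul_one, one_mul]

/-- The homomorphism `CliffordAlgebra (Q ⊕ c P) → CliffordAlgebra Q ⊗ CliffordAlgebra P` sending the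
vector `(v, w)` to `v ⊗ 1 + ω ⊗ w`. -/
noncomputable def toTensor :
    CliffordAlgebra (Q.prod (c • P)) →ₐ[R] CliffordAlgebra Q ⊗[R] CliffordAlgebra P :=
  lift (Q.prod (c • P)) ⟨LinearMap.coprod ((TensorProduct.mk R _ _).flip 1 ∘ₗ ι Q)
    (TensorProduct.mk R _ _ ω ∘ₗ ι P), by
      rintro ⟨v, w⟩
      simp [add_mul, mul_add, h.tmul_ι_mul_self, h.ι_mul, TensorProduct.neg_tmul,
        TensorProduct.add_tmul, Algebra.TensorProduct.algebraMap_apply]⟩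

@[simp]
theorem toTensor_ι (v : V) (w : W) : h.toTensor P (ι _ (v, w)) = ι Q v ⊗ₜ 1 + ω ⊗ₜ ι P w :=
  lift_ι_apply _ _ _

theorem toTensor_map_inl (x : CliffordAlgebra Q) :
    h.toTensor P (map (.inl Q (c • P)) x) = x ⊗ₜ 1 := by
  have hcomp : (h.toTensor P).comp (map (.inl Q (c • P))) = Algebra.TensorProduct.includeLeft := by
    ext v
    simp
  exact DFunLike.congr_fun hcomp x

theorem inv_smul_map_inl_mul_ι_inr_mul_self (w : W) :
    (↑c⁻¹ : R) • (map (.inl Q (c • P)) ω * ι (Q.prod (c • P)) (0, w)) *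
      (↑c⁻¹ : R) • (map (.inl Q (c • P)) ω * ι (Q.prod (c • P)) (0, w)) = algebraMap R _ (P w) := by
  have hsq := (commute_map_inl_ι_inr (c • P) h.mem_evenOdd_zero w).symm.mul_mul_mul_comm
    (map (.inl Q (c • P)) ω) (ι (Q.prod (c • P)) (0, w))
  rw [smul_mul_smul_comm, hsq, h.map_mul_self, ι_sq_scalar, ← map_mul, Algebra.smul_def,
    ← map_mul]
  congr 1
  rw [QuadraticMap.prod_apply, map_zero, zero_add, smul_apply, Units.smul_def, smul_eq_mul,
    mul_mul_mul_comm, Units.inv_mul, one_mul, Units.inv_mul_cancel_left]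

/-- The restriction to `CliffordAlgebra P` of the inverse of `toTensor`, sending the vector `w` to
`c⁻¹ ω w`, where `ω` and `w` are regarded as elements of `CliffordAlgebra (Q ⊕ c P)`. -/
noncomputable def ofRight : CliffordAlgebra P →ₐ[R] CliffordAlgebra (Q.prod (c • P)) :=
  lift P ⟨(↑c⁻¹ : R) • (LinearMap.mulLeft R (map (.inl Q (c • P)) ω) ∘ₗ ι (Q.prod (c • P)) ∘ₗ
    LinearMap.inr R V W), fun w ↦ by
      simpa using h.inv_smul_map_inl_mul_ι_inr_mul_self P w⟩

@[simp]
theorem ofRight_ι (w : W) :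
    h.ofRight P (ι P w) = (↑c⁻¹ : R) • (map (.inl Q (c • P)) ω * ι (Q.prod (c • P)) (0, w)) :=
  lift_ι_apply _ _ _

theorem commute_map_inl_ofRight (x : CliffordAlgebra Q) (y : CliffordAlgebra P) :
    Commute (map (.inl Q (c • P)) x) (h.ofRight P y) := by
  refine commute_of_commute_ι (fun v w ↦ ?_) x y
  rw [ofRight_ι]
  refine Commute.smul_right ?_ (↑c⁻¹ : R)
  have hω := congrArg (map (.inl Q (c • P))) (h.ι_mul v)
  simp only [map_mul, map_neg, map_apply_ι, QuadraticMap.Isometry.inl_apply] at hω ⊢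
  have hw : ι (Q.prod (c • P)) (v, 0) * ι _ (0, w) = -(ι _ (0, w) * ι _ (v, 0)) :=
    ι_mul_ι_comm_of_isOrtho (.inl_inr v w)
  -- `v` anticommutes with both `ω` and `w`, hence commutes with `ω w`.
  rw [commute_iff_eq, ← mul_assoc, hω, neg_mul, mul_assoc, hw, mul_neg, neg_neg, mul_assoc]

/-- The inverse of `toTensor`. -/
noncomputable def ofTensor :
    CliffordAlgebra Q ⊗[R] CliffordAlgebra P →ₐ[R] CliffordAlgebra (Q.prod (c • P)) :=
  Algebra.TensorProduct.lift (map (.inl Q (c • P))) (h.ofRight P) (h.commute_map_inl_ofRight P)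

@[simp]
theorem ofTensor_tmul (x : CliffordAlgebra Q) (y : CliffordAlgebra P) :
    h.ofTensor P (x ⊗ₜ y) = map (.inl Q (c • P)) x * h.ofRight P y :=
  Algebra.TensorProduct.lift_tmul _ _ _ _ _

theorem toTensor_comp_ofTensor : (h.toTensor P).comp (h.ofTensor P) = AlgHom.id R _ := by
  ext w
  · simp
  · simp [toTensor_map_inl, h.mul_self, Algebra.algebraMap_eq_smul_one, TensorProduct.smul_tmul',
      smul_smul]

theorem ofTensor_comp_toTensor : (h.ofTensor P).comp (h.toTensor P) = AlgHom.id R _ := by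
  ext w
  · simp
  · simp [← mul_assoc, h.map_mul_self, ← Algebra.smul_def, smul_smul]

/-- A twisting element turns the graded tensor product decomposition of the Clifford algebra of an
orthogonal sum into an ordinary one, at the cost of rescaling the second form. -/
noncomputable def prodEquivTensor :
    CliffordAlgebra (Q.prod (c • P)) ≃ₐ[R] CliffordAlgebra Q ⊗[R] CliffordAlgebra P :=
  .ofAlgHom (h.toTensor P) (h.ofTensor P) (h.toTensor_comp_ofTensor P) (h.ofTensor_comp_toTensor P)

end IsTwistingElement

end Twisting

section WeightedSumSquares

open QuadraticMap

theorem weightedSumSquares_equivalent_prod {R α β γ : Type*} [CommSemiring R]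
    [Fintype α] [Fintype β] [Fintype γ] (σ : α ⊕ β ≃ γ) {w : γ → R} {w₁ : α → R} {w₂ : β → R}
    (h₁ : ∀ i, w (σ (.inl i)) = w₁ i) (h₂ : ∀ j, w (σ (.inr j)) = w₂ j) :
    (weightedSumSquares R w).Equivalent
      ((weightedSumSquares R w₁).prod (weightedSumSquares R w₂)) :=
  ⟨{ LinearEquiv.funCongrLeft R R σ ≪≫ₗ LinearEquiv.sumArrowLequivProdArrow α β R R with
      map_app' x := by simp [weightedSumSquares_apply, ← σ.sum_comp, h₁, h₂] }⟩

theorem isTwistingElement_weightedSumSquares_fin_two {R : Type*} [CommRing R] {w : Fin 2 → R}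
    {c : Rˣ} (hc : -(w 0 * w 1) = c) :
    IsTwistingElement (weightedSumSquares R w) (ι _ (Pi.single 0 1) * ι _ (Pi.single 1 1)) c := by
  refine .of_isOrtho ?_ ?_ ?_
  · simp [isOrtho_def, weightedSumSquares_apply]
  · rw [← (Pi.basisFun R (Fin 2)).span_eq]
    congr 1
    ext
    simp [eq_comm]
  · simpa [weightedSumSquares_apply] using hc

end WeightedSumSquares

theorem qpq_add_equivalent_prod (p q r s : ℕ) :
    (Qpq (p + r) (q + s)).Equivalent ((Qpq p q).prod (Qpq r s)) := by
  refine weightedSumSquares_equivalent_prod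
    (((finSumFinEquiv.symm.sumCongr finSumFinEquiv.symm).trans <|
      Equiv.sumSumSumComm (Fin p) (Fin q) (Fin r) (Fin s)).trans <|
      (finSumFinEquiv.sumCongr finSumFinEquiv).trans finSumFinEquiv) ?_ ?_ <;>
  · intro i
    induction i using Fin.addCases <;> simp [Nat.lt_add_right]

theorem qpq_equivalent_neg_one_smul (p q : ℕ) : (Qpq p q).Equivalent ((-1 : ℝˣ) • Qpq q p) :=
  ⟨{ LinearEquiv.funCongrLeft ℝ ℝ (finAddFlip : Fin (q + p) ≃ Fin (p + q)) with
      map_app' x := by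
        simp [Qpq, QuadraticMap.weightedSumSquares_apply, Fin.sum_univ_add, add_comm] }⟩

theorem nonempty_cl_add_algEquiv_tensor {p q r s p' q' : ℕ} {ω : Cl r s} {c : ℝˣ}
    (hω : IsTwistingElement (Qpq r s) ω c) (hQ : (Qpq p q).Equivalent (c • Qpq p' q')) :
    Nonempty (Cl (p + r) (q + s) ≃ₐ[ℝ] Cl r s ⊗[ℝ] Cl p' q') := by
  have ⟨f⟩ : (Qpq (p + r) (q + s)).Equivalent ((Qpq r s).prod (c • Qpq p' q')) :=
    (qpq_add_equivalent_prod p q r s).trans <|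
      .trans ⟨.prodComm _ _⟩ (.prod (.refl _) hQ)
  exact ⟨(equivOfIsometry f).trans (hω.prodEquivTensor _)⟩

/-- The fundamental periodicity isomorphisms of real Clifford algebras:
`Cl_{p,q+2} ≅ Cl_{0,2} ⊗ Cl_{q,p}`, `Cl_{p+2,q} ≅ Cl_{2,0} ⊗ Cl_{q,p}` and
`Cl_{p+1,q+1} ≅ Cl_{1,1} ⊗ Cl_{p,q}` (ordinary tensor products of `ℝ`-algebras). -/
theorem cl_quaternionic_decompositions (p q : ℕ) :
    Nonempty (Cl p (q+2) ≃ₐ[ℝ] (Cl 0 2 ⊗[ℝ] Cl q p)) ∧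
    Nonempty (Cl (p+2) q ≃ₐ[ℝ] (Cl 2 0 ⊗[ℝ] Cl q p)) ∧
    Nonempty (Cl (p+1) (q+1) ≃ₐ[ℝ] (Cl 1 1 ⊗[ℝ] Cl p q)) := by
  have h₀₂ : IsTwistingElement (Qpq 0 2) (e 0 2 0 * e 0 2 1) (-1) :=
    isTwistingElement_weightedSumSquares_fin_two (by simp)
  have h₂₀ : IsTwistingElement (Qpq 2 0) (e 2 0 0 * e 2 0 1) (-1) :=
    isTwistingElement_weightedSumSquares_fin_two (by simp)
  have h₁₁ : IsTwistingElement (Qpq 1 1) (e 1 1 0 * e 1 1 1) 1 :=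
    isTwistingElement_weightedSumSquares_fin_two (by simp)
  exact ⟨nonempty_cl_add_algEquiv_tensor h₀₂ (qpq_equivalent_neg_one_smul p q),
    nonempty_cl_add_algEquiv_tensor h₂₀ (qpq_equivalent_neg_one_smul p q),
    nonempty_cl_add_algEquiv_tensor h₁₁ (by simpa only [one_smul] using .refl (Qpq p q))⟩
end
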